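/- Let Θ̃ ⊆ Θ ⊆ ℝ^p and let the true parameter θ₀ lie in the interior of Θ̃ (interior taken in ℝ^p). Suppose the unconstrained estimators T_n satisfy (C1), (C2), and (C3), i.e., for given measurable functions G_n : ℝ^p → ℝ^k and a probability distribution Q on ℝ^k, G_n(T_n) converges in distribution to Q. Then the constrained estimators also satisfy (C3): G_n(T̃_n) converges in distribution to Q. -/

import Mathlib

open MeasureTheory Filter Topology

/-- Theorem 3(b): if the unconstrained estimators `T n` satisfy (C1), (C2) and (C3)
(`G n (T n)` converges in distribution to `Q`), and the true parameter `θ₀` lies in the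
interior of the constrained set `Θt ⊆ Θ`, then the constrained estimators `Tt n` also
satisfy (C3): `G n (Tt n)` converges in distribution to `Q`.  Convergence in distribution
is expressed by convergence of integrals of bounded continuous functions. -/
theorem constrained_estimator_convergence_in_distribution
    {Ω : Type*} [MeasurableSpace Ω] (P : Measure Ω) [IsProbabilityMeasure P]
    {p k : ℕ} (Θ Θt : Set (EuclideanSpace ℝ (Fin p))) (hsub : Θt ⊆ Θ)
    (θ₀ : EuclideanSpace ℝ (Fin p)) (hθ₀ : θ₀ ∈ interior Θt)
    (h : ℕ → Ω → EuclideanSpace ℝ (Fin p) → ℝ)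
    (T Tt : ℕ → Ω → EuclideanSpace ℝ (Fin p))
    (hTmeas : ∀ n, Measurable (T n)) (hTtmeas : ∀ n, Measurable (Tt n))
    (G : ℕ → EuclideanSpace ℝ (Fin p) → EuclideanSpace ℝ (Fin k))
    (hGmeas : ∀ n, Measurable (G n))
    (Q : Measure (EuclideanSpace ℝ (Fin k))) [IsProbabilityMeasure Q]
    -- `T n ω` is a maximizer of `h n ω` over `Θ` whenever one exists (arbitrary otherwise)
    (hT : ∀ n ω, (∃ x ∈ Θ, IsMaxOn (h n ω) Θ x) →
      T n ω ∈ Θ ∧ IsMaxOn (h n ω) Θ (T n ω))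
    -- `Tt n ω` is a maximizer of `h n ω` over `Θt` whenever one exists (arbitrary otherwise)
    (hTt : ∀ n ω, (∃ x ∈ Θt, IsMaxOn (h n ω) Θt x) →
      Tt n ω ∈ Θt ∧ IsMaxOn (h n ω) Θt (Tt n ω))
    -- (C1): the probability that a unique maximizer over `Θ` exists tends to 1
    (hC1 : Tendsto (fun n => P {ω | ∃! x, x ∈ Θ ∧ IsMaxOn (h n ω) Θ x}) atTop (𝓝 1))
    -- (C2): weak consistency of `T n` for `θ₀`
    (hC2 : ∀ ε > 0, Tendsto (fun n => P {ω | ‖T n ω - θ₀‖ < ε}) atTop (𝓝 1))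
    -- (C3) for the unconstrained estimator: `G n (T n)` converges in distribution to `Q`
    (hC3 : ∀ f : BoundedContinuousFunction (EuclideanSpace ℝ (Fin k)) ℝ,
      Tendsto (fun n => ∫ ω, f (G n (T n ω)) ∂P) atTop (𝓝 (∫ x, f x ∂Q))) :
    -- (C3) for the constrained estimator
    ∀ f : BoundedContinuousFunction (EuclideanSpace ℝ (Fin k)) ℝ,
      Tendsto (fun n => ∫ ω, f (G n (Tt n ω)) ∂P) atTop (𝓝 (∫ x, f x ∂Q)) := by
  intro f
  obtain ⟨ε, hε, hball⟩ := Metric.isOpen_iff.1 isOpen_interior θ₀ hθ₀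
  have key : ∀ n ω, (∃! x, x ∈ Θ ∧ IsMaxOn (h n ω) Θ x) → ‖T n ω - θ₀‖ < ε →
      T n ω = Tt n ω := by
    intro n ω hE hB
    obtain ⟨hTΘ, hTmax⟩ := hT n ω hE.exists
    have hTin : T n ω ∈ Θt := interior_subset (hball (by
      rw [Metric.mem_ball, dist_eq_norm]; exact hB))
    obtain ⟨hTtin, hTtmax⟩ := hTt n ω ⟨T n ω, hTin, hTmax.on_subset hsub⟩
    refine hE.unique ⟨hTΘ, hTmax⟩ ⟨hsub hTtin, ?_⟩
    intro x hx
    exact le_trans (isMaxOn_iff.1 hTmax x hx) (isMaxOn_iff.1 hTtmax _ hTin)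
  have hAmeas : ∀ n, MeasurableSet {ω | T n ω = Tt n ω} := fun n =>
    measurableSet_eq_fun (hTmeas n) (hTtmeas n)
  have hBmeas : ∀ n, MeasurableSet {ω | ‖T n ω - θ₀‖ < ε} := fun n =>
    measurableSet_lt ((hTmeas n).sub_const θ₀).norm measurable_const
  have hE1 : Tendsto (fun n => P.real {ω | ∃! x, x ∈ Θ ∧ IsMaxOn (h n ω) Θ x}) atTop (𝓝 1) := by
    simpa [Measure.real, Function.comp_def] using (ENNReal.tendsto_toReal ENNReal.one_ne_top).comp hC1
  have hB1 : Tendsto (fun n => P.real {ω | ‖T n ω - θ₀‖ < ε}) atTop (𝓝 1) := by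
    simpa [Measure.real, Function.comp_def] using (ENNReal.tendsto_toReal ENNReal.one_ne_top).comp (hC2 ε hε)
  have hbound : ∀ n, P.real {ω | T n ω = Tt n ω}ᶜ ≤
      (1 - P.real {ω | ∃! x, x ∈ Θ ∧ IsMaxOn (h n ω) Θ x}) +
      (1 - P.real {ω | ‖T n ω - θ₀‖ < ε}) := by
    intro n
    have h1 : P.real {ω | ∃! x, x ∈ Θ ∧ IsMaxOn (h n ω) Θ x} ≤
        P.real ({ω | T n ω = Tt n ω} ∪ {ω | ‖T n ω - θ₀‖ < ε}ᶜ) := by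
      refine measureReal_mono ?_
      intro ω hω
      by_cases hb : ‖T n ω - θ₀‖ < ε
      · exact Or.inl (key n ω hω hb)
      · exact Or.inr hb
    have h2 := measureReal_union_le (μ := P) {ω | T n ω = Tt n ω} {ω | ‖T n ω - θ₀‖ < ε}ᶜ
    have h3 := probReal_compl_eq_one_sub (μ := P) (hBmeas n)
    have h4 := probReal_compl_eq_one_sub (μ := P) (hAmeas n)
    linarith
  have hint : ∀ S : ℕ → Ω → EuclideanSpace ℝ (Fin p), (∀ n, Measurable (S n)) →
      ∀ n, Integrable (fun ω => f (G n (S n ω))) P := by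
    intro S hS n
    refine Integrable.of_bound
      (f.continuous.measurable.comp ((hGmeas n).comp (hS n))).aestronglyMeasurable ‖f‖ ?_
    exact Eventually.of_forall fun ω => f.norm_coe_le_norm _
  have hdiff : ∀ n, ‖(∫ ω, f (G n (Tt n ω)) ∂P) - ∫ ω, f (G n (T n ω)) ∂P‖ ≤
      (2 * ‖f‖) * ((1 - P.real {ω | ∃! x, x ∈ Θ ∧ IsMaxOn (h n ω) Θ x}) +
      (1 - P.real {ω | ‖T n ω - θ₀‖ < ε})) := by
    intro n
    rw [← integral_sub (hint Tt hTtmeas n) (hint T hTmeas n)]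
    have hi : Integrable ({ω | T n ω = Tt n ω}ᶜ.indicator fun _ => 2 * ‖f‖) P :=
      (integrable_const _).indicator (hAmeas n).compl
    calc _ ≤ ∫ ω, {ω | T n ω = Tt n ω}ᶜ.indicator (fun _ => 2 * ‖f‖) ω ∂P := by
          refine norm_integral_le_of_norm_le hi (Eventually.of_forall fun ω => ?_)
          by_cases hω : T n ω = Tt n ω
          · simp [hω]
          · rw [Set.indicator_of_mem (by exact hω)]
            rw [← dist_eq_norm]
            exact f.dist_le_two_norm _ _
      _ = (2 * ‖f‖) * P.real {ω | T n ω = Tt n ω}ᶜ := by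
          rw [integral_indicator_const _ (hAmeas n).compl, smul_eq_mul, mul_comm]
      _ ≤ _ := mul_le_mul_of_nonneg_left (hbound n) (by positivity)
  have hlim : Tendsto (fun n => (∫ ω, f (G n (Tt n ω)) ∂P) - ∫ ω, f (G n (T n ω)) ∂P)
      atTop (𝓝 0) := by
    refine squeeze_zero_norm hdiff ?_
    have := ((hE1.const_sub 1).add (hB1.const_sub 1)).const_mul (2 * ‖f‖)
    simpa using this
  simpa using hlim.add (hC3 f)
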